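/- arXiv:1506.03827 — 2 statements merged into one kernel-verified Lean document; each statement's English description precedes it below -/
import Mathlib

section
/- Let n ≥ 2, let p ∈ (1,n), and let Ω be a convex compact subset of ℝⁿ whose boundary has positive (n−1)-dimensional Hausdorff measure. Then cap_p(Ω) > 0. -/
open MeasureTheory Metric Set Filter

/-- The variational `p`-capacity of a set `Ω ⊆ ℝⁿ`:
`cap_p(Ω) = inf {∫ |∇f|^p : f ∈ C_c^∞(ℝⁿ), f ≥ 1 on Ω}`. -/
noncomputable def pCap (n : ℕ) (p : ℝ) (Ω : Set (EuclideanSpace ℝ (Fin n))) : ℝ :=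
  sInf { E : ℝ | ∃ f : EuclideanSpace ℝ (Fin n) → ℝ, ContDiff ℝ (⊤ : ℕ∞) f ∧ HasCompactSupport f ∧
      (∀ x ∈ Ω, 1 ≤ f x) ∧ E = ∫ x, ‖fderiv ℝ f x‖ ^ p }

/-- `σ_{n-1}`: the `(n-1)`-dimensional Hausdorff measure of the unit sphere in `ℝⁿ`. -/
noncomputable def sphereArea (n : ℕ) : ℝ :=
  ((μH[(n : ℝ) - 1] : Measure (EuclideanSpace ℝ (Fin n)))
    (Metric.sphere (0 : EuclideanSpace ℝ (Fin n)) 1)).toReal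

/-- The `(n-1)`-dimensional Hausdorff measure (surface area) of a set in `ℝⁿ`. -/
noncomputable def area (n : ℕ) (s : Set (EuclideanSpace ℝ (Fin n))) : ℝ :=
  ((μH[(n : ℝ) - 1] : Measure (EuclideanSpace ℝ (Fin n))) s).toReal

/-! Integrating `Df` along the rays `r ↦ x + r • v` and averaging over `v` in the unit ball gives
`‖f x‖ ≤ ∫₀^∞ ⨍_{B(x,r)} ‖Df‖ dr` for compactly supported `f`. If `‖f x‖ ≥ 1`, the average cannot
stay below a small multiple of `min (r^((s-n)/p)) (r^(-n/p))`, which is integrable when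
`n - p < s` and `p < n`. So by Jensen's inequality some ball satisfies
`min (r^s) 1 ≤ C ∫_{B(x,r)} ‖Df‖^p`. Vitali's covering theorem then bounds the `s`-dimensional
Hausdorff content of `{‖f‖ ≥ 1}` by a multiple of the energy `∫ ‖Df‖^p`, provided the energy is
small. Hence a set of zero `p`-capacity is `μH[s]`-null for every `s > n - p`; for `p > 1` one may
take `s = n - 1`, and a closed set contains its frontier. -/

open scoped ENNReal Topology

theorem integrableOn_Ioi_min_rpow {a b : ℝ} (ha : -1 < a) (hb : b < -1) :
    IntegrableOn (fun r : ℝ => min (r ^ a) (r ^ b)) (Ioi 0) := by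
  have hmeas : Measurable fun r : ℝ => min (r ^ a) (r ^ b) := by fun_prop
  have hnonneg {r : ℝ} (hr : 0 < r) : 0 ≤ min (r ^ a) (r ^ b) := by positivity
  rw [← Ioc_union_Ioi_eq_Ioi zero_le_one]
  refine IntegrableOn.union ?_ ?_
  · have hint : IntegrableOn (fun r : ℝ => r ^ a) (Ioc 0 1) :=
      (intervalIntegrable_iff_integrableOn_Ioc_of_le zero_le_one).1
        (intervalIntegral.intervalIntegrable_rpow' ha)
    refine hint.mono' hmeas.aestronglyMeasurable ?_
    filter_upwards [ae_restrict_mem measurableSet_Ioc] with r hr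
    exact (Real.norm_of_nonneg (hnonneg hr.1)).trans_le (min_le_left _ _)
  · refine (integrableOn_Ioi_rpow_of_lt hb one_pos).mono' hmeas.aestronglyMeasurable ?_
    filter_upwards [ae_restrict_mem measurableSet_Ioi] with r hr
    exact (Real.norm_of_nonneg (hnonneg (one_pos.trans hr))).trans_le (min_le_right _ _)

theorem min_rpow_div_rpow_div_rpow {p r : ℝ} (hp : 0 < p) (hr : 0 < r) (s t : ℝ) :
    min (r ^ ((s - t) / p)) (r ^ (-t / p)) ^ p = min (r ^ s) 1 / r ^ t := by
  have hpow (a : ℝ) : (r ^ (a / p)) ^ p = r ^ a := by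
    rw [← Real.rpow_mul hr.le, div_mul_cancel₀ _ hp.ne']
  rw [(Real.monotoneOn_rpow_Ici_of_exponent_nonneg hp.le).map_min
    (Real.rpow_nonneg hr.le _) (Real.rpow_nonneg hr.le _), hpow, hpow, Real.rpow_sub hr,
    Real.rpow_neg hr.le, ← one_div, min_div_div_right (Real.rpow_nonneg hr.le t)]

theorem laverage_le_rpow_laverage_rpow {α : Type*} {m : MeasurableSpace α} (μ : Measure α)
    {p : ℝ} (hp : 1 ≤ p) {g : α → ℝ≥0∞} (hg : AEMeasurable g μ) :
    ⨍⁻ x, g x ∂μ ≤ (⨍⁻ x, g x ^ p ∂μ) ^ (1 / p) := by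
  by_cases hμ : IsFiniteMeasure μ ∧ NeZero μ
  · obtain ⟨_, _⟩ := hμ
    have := eLpNorm'_le_eLpNorm'_of_exponent_le one_pos hp ((μ univ)⁻¹ • μ)
      (hg.smul_measure _).aestronglyMeasurable
    simpa [eLpNorm'_eq_lintegral_enorm, laverage] using this
  · rw [not_and_or, not_isFiniteMeasure_iff, not_neZero] at hμ
    obtain h | rfl := hμ <;> simp [laverage_eq, *]

section HausdorffMeasure

variable {X : Type*} [MetricSpace X] [SecondCountableTopology X] [MeasurableSpace X] [BorelSpace X]
  {K : Set X} {s : ℝ}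

theorem exists_countable_subset_iUnion_closedBall_tsum_rpow_le (hs : 0 < s) (ν : Measure X)
    [IsFiniteMeasure ν] {r : X → ℝ} (hr : ∀ x ∈ K, 0 < r x)
    (hν : ∀ x ∈ K, ENNReal.ofReal (r x) ^ s ≤ ν (closedBall x (r x))) :
    ∃ u ⊆ K, u.Countable ∧ K ⊆ ⋃ x : u, closedBall x.1 (5 * r x) ∧
      ∑' x : u, ENNReal.ofReal (r x) ^ s ≤ ν univ := by
  have hbdd : ∀ x ∈ K, r x ≤ (ν univ ^ s⁻¹).toReal := fun x hx =>
    (ENNReal.ofReal_le_iff_le_toReal (by finiteness)).1 <|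
      (ENNReal.le_rpow_inv_iff hs).2 ((hν x hx).trans (measure_mono (subset_univ _)))
  obtain ⟨u, huK, hdisj, hcover⟩ := Vitali.exists_disjoint_subfamily_covering_enlargement_closedBall
    K id r _ hbdd 5 (by norm_num)
  have hu : u.Countable := hdisj.countable_of_nonempty_interior fun x hx =>
    ⟨x, ball_subset_interior_closedBall (mem_ball_self (hr x (huK hx)))⟩
  refine ⟨u, huK, hu, fun x hx => ?_, ?_⟩
  · obtain ⟨y, hy, hxy⟩ := hcover x hx
    exact mem_iUnion.2 ⟨⟨y, hy⟩, hxy (mem_closedBall_self (hr x hx).le)⟩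
  · calc ∑' x : u, ENNReal.ofReal (r x) ^ s
        ≤ ∑' x : u, ν (closedBall x.1 (r x)) := ENNReal.tsum_le_tsum fun x => hν x (huK x.2)
      _ = ν (⋃ x ∈ u, closedBall x (r x)) :=
        (measure_biUnion hu hdisj fun _ _ => measurableSet_closedBall).symm
      _ ≤ ν univ := measure_mono (subset_univ _)

theorem hausdorffMeasure_eq_zero_of_forall_exists_measure (hs : 0 < s)
    (h : ∀ δ : ℝ≥0∞, δ ≠ 0 → ∃ ν : Measure X, ν univ < δ ∧
      ∀ x ∈ K, ∃ r > 0, ENNReal.ofReal r ^ s ≤ ν (closedBall x r)) :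
    μH[s] K = 0 := by
  have hcover (k : ℕ) : ∃ (u : Set X) (r : X → ℝ), u.Countable ∧
      K ⊆ ⋃ x : u, closedBall x.1 (5 * r x) ∧
      ∑' x : u, ENNReal.ofReal (r x) ^ s ≤ (k : ℝ≥0∞)⁻¹ := by
    obtain ⟨ν, hνδ, hν⟩ := h (k : ℝ≥0∞)⁻¹ (by simp)
    choose! r hr hrν using hν
    have : IsFiniteMeasure ν := ⟨hνδ.trans_le le_top⟩
    obtain ⟨u, -, hu, hKu, hsum⟩ :=
      exists_countable_subset_iUnion_closedBall_tsum_rpow_le hs ν hr hrν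
    exact ⟨u, r, hu, hKu, hsum.trans hνδ.le⟩
  choose u r hu hKu hsum using hcover
  have (k : ℕ) : Countable (u k) := (hu k).to_subtype
  have hdiam (k : ℕ) (x : u k) :
      ediam (closedBall x.1 (5 * r k x)) ^ s ≤ 10 ^ s * ENNReal.ofReal (r k x) ^ s := by
    rw [← ENNReal.mul_rpow_of_nonneg _ _ hs.le]
    gcongr
    calc ediam (closedBall x.1 (5 * r k x)) ≤ ENNReal.ofReal (10 * r k x) :=
          ediam_le_of_forall_dist_le fun y hy z hz => by
            linarith [dist_triangle_right y z x.1, mem_closedBall.1 hy, mem_closedBall.1 hz]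
      _ = 10 * ENNReal.ofReal (r k x) := by simp [ENNReal.ofReal_mul]
  have hlim : Tendsto (fun k : ℕ => 10 ^ s * (k : ℝ≥0∞)⁻¹) atTop (𝓝 0) := by
    simpa using ENNReal.Tendsto.const_mul ENNReal.tendsto_inv_nat_nhds_zero
      (.inr (by finiteness : (10 : ℝ≥0∞) ^ s ≠ ∞))
  have hradius : Tendsto (fun k : ℕ => (10 ^ s * (k : ℝ≥0∞)⁻¹) ^ s⁻¹) atTop (𝓝 0) := by
    simpa [hs] using hlim.ennrpow_const s⁻¹
  have htsum (k : ℕ) : ∑' x : u k, ediam (closedBall x.1 (5 * r k x)) ^ s ≤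
      10 ^ s * (k : ℝ≥0∞)⁻¹ :=
    calc _ ≤ ∑' x : u k, 10 ^ s * ENNReal.ofReal (r k x) ^ s := ENNReal.tsum_le_tsum (hdiam k)
      _ ≤ _ := by rw [ENNReal.tsum_mul_left]; gcongr; exact hsum k
  have hliminf := Measure.hausdorffMeasure_le_liminf_tsum s K _ hradius
    (fun k (x : u k) => closedBall x.1 (5 * r k x))
    (.of_forall fun k x => (ENNReal.le_rpow_inv_iff hs).2 ((ENNReal.le_tsum x).trans (htsum k)))
    (.of_forall hKu)
  exact le_bot_iff.1 <| hliminf.trans <| (liminf_le_liminf (.of_forall htsum)).trans_eq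
    hlim.liminf_eq

end HausdorffMeasure

section FiniteDimensional

variable {E F : Type*} [NormedAddCommGroup E] [NormedSpace ℝ E] [NormedAddCommGroup F]
  [NormedSpace ℝ F] {f : E → F}

theorem enorm_le_lintegral_Ioi_enorm_fderiv_apply (hf : ContDiff ℝ 1 f)
    (hfc : HasCompactSupport f) (x : E) {v : E} (hv : v ≠ 0) :
    ‖f x‖ₑ ≤ ∫⁻ r in Ioi (0 : ℝ), ‖fderiv ℝ f (x + r • v) v‖ₑ := by
  have hray : Topology.IsClosedEmbedding fun r : ℝ => x + (-r) • v :=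
    (Homeomorph.addLeft x).isClosedEmbedding.comp <|
      (isClosedEmbedding_smul_left hv).comp (Homeomorph.neg ℝ).isClosedEmbedding
  have hderiv (r : ℝ) : deriv (fun r : ℝ => f (x + (-r) • v)) r =
      -fderiv ℝ f (x + (-r) • v) v := by
    have hv' : HasDerivAt (fun r : ℝ => x + (-r) • v) (-v) r := by
      simpa using ((hasDerivAt_neg r).smul_const v).const_add x
    simpa only [map_neg, Function.comp_def] using
      ((hf.differentiable one_ne_zero _).hasFDerivAt.comp_hasDerivAt r hv').deriv
  calc ‖f x‖ₑ = ‖f (x + (-0 : ℝ) • v)‖ₑ := by simp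
    _ ≤ ∫⁻ r in Iic (0 : ℝ), ‖deriv (fun r : ℝ => f (x + (-r) • v)) r‖ₑ :=
      (hfc.comp_isClosedEmbedding hray).enorm_le_lintegral_Ici_deriv (by fun_prop) 0
    _ = ∫⁻ r in Neg.neg ⁻¹' Ici (0 : ℝ), ‖fderiv ℝ f (x + (-r) • v) v‖ₑ := by
      simp only [hderiv, enorm_neg, neg_preimage, neg_Ici, neg_zero]
    _ = ∫⁻ r in Ici (0 : ℝ), ‖fderiv ℝ f (x + r • v) v‖ₑ :=
      (Measure.measurePreserving_neg volume).setLIntegral_comp_preimage_emb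
        (MeasurableEquiv.neg ℝ).measurableEmbedding (fun r => ‖fderiv ℝ f (x + r • v) v‖ₑ) _
    _ = _ := setLIntegral_congr Ioi_ae_eq_Ici.symm

variable [FiniteDimensional ℝ E] [MeasurableSpace E] [BorelSpace E] (μ : Measure E)
  [μ.IsAddHaarMeasure]

theorem setLAverage_closedBall_eq_setLAverage_unitClosedBall {g : E → ℝ≥0∞} (hg : Measurable g)
    (x : E) {r : ℝ} (hr : 0 < r) :
    ⨍⁻ y in closedBall x r, g y ∂μ = ⨍⁻ v in closedBall 0 1, g (x + r • v) ∂μ := by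
  have hpre : (fun v => x + r • v) ⁻¹' closedBall x r = closedBall (0 : E) 1 := by
    ext v; simp [norm_smul, abs_of_pos hr, hr]
  have hmap : μ.map (fun v => x + r • v) =
      ENNReal.ofReal |(r ^ Module.finrank ℝ E)⁻¹| • μ := by
    change μ.map ((x + ·) ∘ (r • ·)) = _
    rw [← Measure.map_map (by fun_prop) (by fun_prop), Measure.map_addHaar_smul μ hr.ne',
      Measure.map_smul, map_add_left_eq_self]
  have hlint {h : E → ℝ≥0∞} (hh : Measurable h) : ∫⁻ v in closedBall 0 1, h (x + r • v) ∂μ =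
      ENNReal.ofReal |(r ^ Module.finrank ℝ E)⁻¹| * ∫⁻ y in closedBall x r, h y ∂μ := by
    rw [← hpre, ← setLIntegral_map measurableSet_closedBall hh (by fun_prop), hmap,
      Measure.restrict_smul, lintegral_smul_measure, smul_eq_mul]
  have hvol := hlint measurable_one
  simp only [Pi.one_apply, setLIntegral_one] at hvol
  rw [setLAverage_eq, setLAverage_eq, hlint hg, hvol,
    ENNReal.mul_div_mul_left _ _ (ENNReal.ofReal_pos.2 (by positivity)).ne' (by finiteness)]

theorem enorm_le_lintegral_Ioi_setLAverage_closedBall [Nontrivial E]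
    (hf : ContDiff ℝ 1 f) (hfc : HasCompactSupport f) (x : E) :
    ‖f x‖ₑ ≤ ∫⁻ r in Ioi (0 : ℝ), ⨍⁻ y in closedBall x r, ‖fderiv ℝ f y‖ₑ ∂μ := by
  have hDf : Continuous (fderiv ℝ f) := hf.continuous_fderiv one_ne_zero
  have hray : ∀ᵐ v ∂μ.restrict (closedBall 0 1),
      ‖f x‖ₑ ≤ ∫⁻ r in Ioi (0 : ℝ), ‖fderiv ℝ f (x + r • v)‖ₑ := by
    filter_upwards [ae_restrict_mem measurableSet_closedBall,
      ae_restrict_of_ae (Measure.ae_ne μ 0)] with v hv1 hv0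
    refine (enorm_le_lintegral_Ioi_enorm_fderiv_apply hf hfc x hv0).trans
      (lintegral_mono fun r => ?_)
    exact enorm_le_iff_norm_le.2 <| (fderiv ℝ f (x + r • v)).le_of_opNorm_le_of_le le_rfl
      (mem_closedBall_zero_iff.1 hv1) |>.trans_eq (mul_one _)
  calc ‖f x‖ₑ = ⨍⁻ _ in closedBall (0 : E) 1, ‖f x‖ₑ ∂μ :=
        (setLAverage_const (measure_closedBall_pos μ 0 one_pos).ne'
          measure_closedBall_lt_top.ne _).symm
    _ ≤ ⨍⁻ v in closedBall (0 : E) 1, (∫⁻ r in Ioi (0 : ℝ), ‖fderiv ℝ f (x + r • v)‖ₑ) ∂μ :=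
      laverage_mono_ae hray
    _ = ∫⁻ r in Ioi (0 : ℝ), ⨍⁻ v in closedBall (0 : E) 1, ‖fderiv ℝ f (x + r • v)‖ₑ ∂μ :=
      have hcont : Continuous fun z : E × ℝ => ‖fderiv ℝ f (x + z.2 • z.1)‖ₑ := by fun_prop
      lintegral_lintegral_swap hcont.aemeasurable
    _ = _ := setLIntegral_congr_fun measurableSet_Ioi fun r hr =>
      (setLAverage_closedBall_eq_setLAverage_unitClosedBall μ hDf.enorm.measurable x hr).symm

theorem exists_rpow_mul_measure_closedBall_le [Nontrivial E]
    (hf : ContDiff ℝ 1 f) (hfc : HasCompactSupport f) {p : ℝ} (hp : 1 ≤ p) {x : E} {φ : ℝ → ℝ≥0∞}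
    (hφ : ∫⁻ r in Ioi (0 : ℝ), φ r < ‖f x‖ₑ) :
    ∃ r > 0, φ r ^ p * μ (closedBall x r) ≤ ∫⁻ y in closedBall x r, ‖fderiv ℝ f y‖ₑ ^ p ∂μ := by
  have hDf : Continuous (fderiv ℝ f) := hf.continuous_fderiv one_ne_zero
  by_contra! hsmall
  refine (enorm_le_lintegral_Ioi_setLAverage_closedBall μ hf hfc x).not_gt (hφ.trans_le' ?_)
  refine setLIntegral_mono' measurableSet_Ioi fun r hr => ?_
  calc ⨍⁻ y in closedBall x r, ‖fderiv ℝ f y‖ₑ ∂μ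
      ≤ (⨍⁻ y in closedBall x r, ‖fderiv ℝ f y‖ₑ ^ p ∂μ) ^ (1 / p) :=
        laverage_le_rpow_laverage_rpow _ hp hDf.enorm.aemeasurable
    _ ≤ (φ r ^ p) ^ (1 / p) := by
      rw [setLAverage_eq]
      gcongr
      exact ENNReal.div_le_of_le_mul (hsmall r hr).le
    _ = φ r := by rw [one_div, ENNReal.rpow_rpow_inv (by positivity)]

variable {p s : ℝ}

theorem exists_ofReal_min_rpow_le_mul_setLIntegral_closedBall (hp : 1 ≤ p)
    (hpE : p < Module.finrank ℝ E) (hs : Module.finrank ℝ E - p < s) :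
    ∃ C : ℝ≥0∞, C ≠ ∞ ∧ ∀ f : E → F, ContDiff ℝ 1 f → HasCompactSupport f → ∀ x, 1 ≤ ‖f x‖ →
      ∃ r > 0, ENNReal.ofReal (min (r ^ s) 1) ≤
        C * ∫⁻ y in closedBall x r, ‖fderiv ℝ f y‖ₑ ^ p ∂μ := by
  have hp0 : 0 < p := one_pos.trans_le hp
  set n := Module.finrank ℝ E
  have : Nontrivial E := Module.nontrivial_of_finrank_pos (R := ℝ) (by exact_mod_cast hp0.trans hpE)
  -- The exponent at `0` exceeds `-1` since `n - p < s`, the one at `∞` is below `-1` since `p < n`.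
  set ψ : ℝ → ℝ := fun r => min (r ^ ((s - n) / p)) (r ^ (-n / p))
  have hψ : ∫⁻ r in Ioi (0 : ℝ), ENNReal.ofReal (ψ r) ≠ ∞ :=
    (integrableOn_Ioi_min_rpow (by rw [lt_div_iff₀ hp0]; linarith)
      (by rw [div_lt_iff₀ hp0]; linarith)).lintegral_lt_top.ne
  obtain ⟨c, hc, hcψ⟩ := ENNReal.exists_nnreal_pos_mul_lt hψ one_ne_zero
  have hω0 : μ (ball 0 1) ≠ 0 := (measure_ball_pos μ 0 one_pos).ne'
  have hω : μ (ball 0 1) ≠ ∞ := measure_ball_lt_top.ne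
  refine ⟨(c ^ p * μ (ball 0 1))⁻¹, by simp [hc.ne', hω0], fun f hf hfc x hx => ?_⟩
  obtain ⟨r, hr, hle⟩ := exists_rpow_mul_measure_closedBall_le μ hf hfc hp (x := x)
    (φ := fun r => c * ENNReal.ofReal (ψ r)) <| by
      rw [lintegral_const_mul' _ _ ENNReal.coe_ne_top]
      exact hcψ.trans_le (by simpa using ENNReal.ofReal_le_ofReal hx)
  refine ⟨r, hr, ?_⟩
  rw [← ENNReal.mul_le_iff_le_inv (by simp [hc.ne', hω0]) (by finiteness)]
  refine le_of_eq_of_le ?_ hle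
  rw [ENNReal.mul_rpow_of_nonneg _ _ hp0.le, ENNReal.ofReal_rpow_of_nonneg (by positivity) hp0.le,
    min_rpow_div_rpow_div_rpow hp0 hr, Measure.addHaar_closedBall μ x hr.le, Real.rpow_natCast]
  have hcancel : ENNReal.ofReal (min (r ^ s) 1 / r ^ n) * ENNReal.ofReal (r ^ n) =
      ENNReal.ofReal (min (r ^ s) 1) := by
    rw [← ENNReal.ofReal_mul (by positivity), div_mul_cancel₀ _ (by positivity)]
  rw [← hcancel]
  ring

theorem hausdorffMeasure_eq_zero_of_forall_exists_lintegral_enorm_fderiv_lt (hp : 1 ≤ p)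
    (hpE : p < Module.finrank ℝ E) (hs : Module.finrank ℝ E - p < s) {K : Set E}
    (h : ∀ δ : ℝ≥0∞, δ ≠ 0 → ∃ f : E → F, ContDiff ℝ 1 f ∧ HasCompactSupport f ∧
      (∀ x ∈ K, 1 ≤ ‖f x‖) ∧ ∫⁻ y, ‖fderiv ℝ f y‖ₑ ^ p ∂μ < δ) :
    μH[s] K = 0 := by
  obtain ⟨C, hC, hball⟩ :=
    exists_ofReal_min_rpow_le_mul_setLIntegral_closedBall (F := F) μ hp hpE hs
  refine hausdorffMeasure_eq_zero_of_forall_exists_measure (by linarith) fun δ hδ => ?_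
  obtain ⟨f, hf, hfc, hfK, hfδ⟩ := h (min δ 1 / C) (by simp [hδ, hC])
  set ν := C • μ.withDensity fun y => ‖fderiv ℝ f y‖ₑ ^ p
  have hνuniv : ν univ < min δ 1 := by
    simpa [ν, mul_comm] using ENNReal.mul_lt_of_lt_div hfδ
  refine ⟨ν, hνuniv.trans_le (min_le_left _ _), fun x hx => ?_⟩
  obtain ⟨r, hr, hle⟩ := hball f hf hfc x (hfK x hx)
  have hle' : ENNReal.ofReal (min (r ^ s) 1) ≤ ν (closedBall x r) := by
    simpa [ν, withDensity_apply _ measurableSet_closedBall] using hle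
  have hlt : ENNReal.ofReal (min (r ^ s) 1) < 1 :=
    (hle'.trans (measure_mono (subset_univ _))).trans_lt (hνuniv.trans_le (min_le_right _ _))
  -- Total mass less than `1` rules out `1 ≤ r`.
  have hmin : min (r ^ s) 1 = r ^ s := by
    simp only [ENNReal.ofReal_lt_one, min_lt_iff, lt_self_iff_false, or_false] at hlt
    exact min_eq_left hlt.le
  exact ⟨r, hr, by rwa [ENNReal.ofReal_rpow_of_pos hr, ← hmin]⟩

end FiniteDimensional

theorem exists_contDiff_hasCompactSupport_one_le {E : Type*} [NormedAddCommGroup E]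
    [NormedSpace ℝ E] [FiniteDimensional ℝ E] {K : Set E} (hK : Bornology.IsBounded K) :
    ∃ f : E → ℝ, ContDiff ℝ (⊤ : ℕ∞) f ∧ HasCompactSupport f ∧ ∀ x ∈ K, 1 ≤ f x := by
  obtain ⟨r, hr, hKr⟩ := hK.subset_closedBall_lt 0 0
  let φ : ContDiffBump (0 : E) := ⟨r, r + 1, hr, lt_add_one r⟩
  exact ⟨φ, φ.contDiff, φ.hasCompactSupport, fun x hx => (φ.one_of_mem_closedBall (hKr hx)).ge⟩

theorem exists_lintegral_enorm_fderiv_rpow_lt_of_pCap_lt {n : ℕ} {p c : ℝ} (hp : 0 < p)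
    {Ω : Set (EuclideanSpace ℝ (Fin n))} (hΩ : Bornology.IsBounded Ω) (h : pCap n p Ω < c) :
    ∃ f : EuclideanSpace ℝ (Fin n) → ℝ, ContDiff ℝ 1 f ∧ HasCompactSupport f ∧
      (∀ x ∈ Ω, 1 ≤ f x) ∧ ∫⁻ x, ‖fderiv ℝ f x‖ₑ ^ p < ENNReal.ofReal c := by
  obtain ⟨g, hg, hgc, hgΩ⟩ := exists_contDiff_hasCompactSupport_one_le hΩ
  obtain ⟨_, ⟨f, hf, hfc, hfΩ, rfl⟩, hlt⟩ :=
    exists_lt_of_csInf_lt (by exact ⟨_, g, hg, hgc, hgΩ, rfl⟩) h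
  have hf1 : ContDiff ℝ 1 f := hf.of_le (by exact_mod_cast le_top)
  refine ⟨f, hf1, hfc, hfΩ, ?_⟩
  have hint : Integrable fun x => ‖fderiv ℝ f x‖ ^ p :=
    ((hf1.continuous_fderiv one_ne_zero).norm.rpow_const fun _ => .inr hp.le)
      |>.integrable_of_hasCompactSupport
        ((hfc.fderiv ℝ).comp_left (g := fun L => ‖L‖ ^ p) (by simp [hp.ne']))
  calc ∫⁻ x, ‖fderiv ℝ f x‖ₑ ^ p = ∫⁻ x, ENNReal.ofReal (‖fderiv ℝ f x‖ ^ p) := by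
        simp [← ENNReal.ofReal_rpow_of_nonneg, hp.le]
    _ = ENNReal.ofReal (∫ x, ‖fderiv ℝ f x‖ ^ p) :=
      (ofReal_integral_eq_lintegral_ofReal hint (.of_forall fun x => by positivity)).symm
    _ < ENNReal.ofReal c := (ENNReal.ofReal_lt_ofReal_iff_of_nonneg
      (integral_nonneg fun x => by positivity)).2 hlt

theorem pCap_pos_of_area_pos_general {n : ℕ} {p s : ℝ} (hp : 1 ≤ p) (hpn : p < n) (hs : n - p < s)
    {Ω : Set (EuclideanSpace ℝ (Fin n))} (hΩ : Bornology.IsBounded Ω) (hmeas : μH[s] Ω ≠ 0) :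
    0 < pCap n p Ω := by
  by_contra! hcap
  refine hmeas <| hausdorffMeasure_eq_zero_of_forall_exists_lintegral_enorm_fderiv_lt (F := ℝ)
    volume hp (by simpa using hpn) (by simpa using hs) fun δ hδ => ?_
  obtain ⟨c, -, hc, hcδ⟩ := ENNReal.lt_iff_exists_real_btwn.1 (pos_iff_ne_zero.2 hδ)
  obtain ⟨f, hf, hfc, hfΩ, hfc'⟩ := exists_lintegral_enorm_fderiv_rpow_lt_of_pCap_lt
    (one_pos.trans_le hp) hΩ (hcap.trans_lt (ENNReal.ofReal_pos.1 hc))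
  exact ⟨f, hf, hfc, fun x hx => (hfΩ x hx).trans (Real.le_norm_self _), hfc'.trans hcδ⟩

/-- A convex compact set with boundary of positive surface area
has positive `p`-capacity for every `p ∈ (1,n)`. -/
theorem pCap_pos_of_area_pos
    (n : ℕ) (hn : 2 ≤ n) (p : ℝ) (hp : p ∈ Set.Ioo (1 : ℝ) (n : ℝ))
    (Ω : Set (EuclideanSpace ℝ (Fin n))) (hconv : Convex ℝ Ω) (hcomp : IsCompact Ω)
    (harea : 0 < area n (frontier Ω)) :
    0 < pCap n p Ω :=
  pCap_pos_of_area_pos_general hp.1.le hp.2 (sub_lt_sub_left hp.1 _) hcomp.isBounded fun h =>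
    harea.ne' (by simp [area, measure_mono_null hcomp.isClosed.frontier_subset h])
end

section
/- Let n ≥ 3 and let Ω be a convex compact subset of ℝⁿ with nonempty interior and smooth boundary. Then for every x ∈ ℝⁿ and every r > 0, ∫_{∂Ω}|x−y|^{2−n} dσ(y) ≤ area(∂Ω)·r + (n−2)·σ_{n−1}·r^{1/(2−n)}, where the integral is with respect to the (n−1)-dimensional Hausdorff measure σ on ∂Ω. -/
open MeasureTheory Metric Set Filter

/-- A set `Ω ⊆ ℝⁿ` has smooth (C^∞) boundary: near each boundary point, the
boundary is the regular zero set of a smooth real-valued function. -/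
def HasSmoothBoundary (n : ℕ) (Ω : Set (EuclideanSpace ℝ (Fin n))) : Prop :=
  ∀ x ∈ frontier Ω, ∃ (U : Set (EuclideanSpace ℝ (Fin n))) (f : EuclideanSpace ℝ (Fin n) → ℝ),
    IsOpen U ∧ x ∈ U ∧ ContDiff ℝ (⊤ : ℕ∞) f ∧ (∀ y ∈ U, fderiv ℝ f y ≠ 0) ∧
    U ∩ frontier Ω = U ∩ f ⁻¹' {0}

/-!
Move each point of `∂Ω` inside a ball along an outer normal of `Ω` until it reaches the bounding
sphere. Since the normals of a convex set form a monotone field, this map does not decrease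
distances, so `∂Ω ∩ closedBall x ρ` has at most the `(n - 1)`-dimensional Hausdorff measure of the
sphere of radius `ρ`, that is `ρ ^ (n - 1)` times that of the unit sphere. In the layer-cake formula
for the potential, superlevel sets at heights up to `r` are bounded by the whole of `∂Ω`, and those
at heights `t > r` are contained in the ball of radius `t ^ (1 / (2 - n))`, where the growth bound
applies.
-/

open Bornology InnerProductSpace Module
open scoped ENNReal NNReal Pointwise Topology

section LayerCake

theorem lintegral_ofReal_le_mul_add_lintegral_Ioi_meas_lt {α : Type*} [MeasurableSpace α]
    {μ : Measure α} {f : α → ℝ} (hf₀ : 0 ≤ᵐ[μ] f) (hf : AEMeasurable f μ) {r : ℝ} (hr : 0 ≤ r) :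
    ∫⁻ a, ENNReal.ofReal (f a) ∂μ ≤
      μ univ * ENNReal.ofReal r + ∫⁻ t in Ioi r, μ {a | t < f a} := by
  rw [lintegral_eq_lintegral_meas_lt μ hf₀ hf, ← Ioc_union_Ioi_eq_Ioi hr,
    lintegral_union measurableSet_Ioi (Ioc_disjoint_Ioi le_rfl)]
  gcongr
  calc ∫⁻ t in Ioc 0 r, μ {a | t < f a}
      ≤ ∫⁻ _ in Ioc 0 r, μ univ := lintegral_mono fun _ => measure_mono (subset_univ _)
    _ = μ univ * ENNReal.ofReal r := by simp

theorem lintegral_Ioi_ofReal_rpow_neg {p : ℝ} (hp : 1 < p) {r : ℝ} (hr : 0 < r) :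
    ∫⁻ t in Ioi r, ENNReal.ofReal (t ^ (-p)) = ENNReal.ofReal ((p - 1)⁻¹ * r ^ (1 - p)) := by
  have hp' : -p < -1 := by linarith
  have hnonneg : ∀ᵐ t ∂volume.restrict (Ioi r), 0 ≤ t ^ (-p) :=
    ae_restrict_of_forall_mem measurableSet_Ioi fun t ht => Real.rpow_nonneg (hr.trans ht).le _
  rw [← ofReal_integral_eq_lintegral_ofReal (integrableOn_Ioi_rpow_of_lt hp' hr) hnonneg,
    integral_Ioi_rpow_of_lt hp' hr, neg_add_eq_sub, ← neg_sub p 1, div_neg, neg_div, neg_neg,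
    div_eq_inv_mul]

variable {X : Type*} [PseudoMetricSpace X]

theorem setOf_lt_rpow_dist_neg_subset_closedBall (x : X) {s : ℝ} (hs : 0 < s) {t : ℝ}
    (ht : 0 < t) : {y | t < dist x y ^ (-s)} ⊆ closedBall x (t ^ (-s⁻¹)) := by
  intro y hy
  have h := Real.rpow_le_rpow_of_nonpos ht (le_of_lt hy) (inv_nonpos.2 (neg_nonpos.2 hs.le))
  rwa [Real.rpow_rpow_inv dist_nonneg (neg_ne_zero.2 hs.ne'), inv_neg, ← mem_closedBall'] at h

-- At `y = x` the integrand is `0` rather than `∞`, as `0 ^ (-s) = 0` in `ℝ`; if `C < ∞`, the growth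
-- bound makes `{x}` a null set, so this does not change the integral.
theorem lintegral_rpow_dist_le_of_measure_closedBall_le [MeasurableSpace X]
    [OpensMeasurableSpace X] {μ : Measure X} {x : X} {s d : ℝ} (hs : 0 < s) (hsd : s < d)
    {C : ℝ≥0∞} (hμ : ∀ ρ > 0, μ (closedBall x ρ) ≤ ENNReal.ofReal (ρ ^ d) * C)
    {r : ℝ} (hr : 0 < r) :
    ∫⁻ y, ENNReal.ofReal (dist x y ^ (-s)) ∂μ ≤
      μ univ * ENNReal.ofReal r + ENNReal.ofReal (s / (d - s) * r ^ (1 - d / s)) * C := by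
  have hsuper : ∀ t ∈ Ioi r,
      μ {y | t < dist x y ^ (-s)} ≤ ENNReal.ofReal (t ^ (-(d / s))) * C := by
    intro t ht
    have ht₀ : 0 < t := hr.trans ht
    calc μ {y | t < dist x y ^ (-s)}
        ≤ μ (closedBall x (t ^ (-s⁻¹))) :=
          measure_mono (setOf_lt_rpow_dist_neg_subset_closedBall x hs ht₀)
      _ ≤ ENNReal.ofReal ((t ^ (-s⁻¹)) ^ d) * C := hμ _ (Real.rpow_pos_of_pos ht₀ _)
      _ = ENNReal.ofReal (t ^ (-(d / s))) * C := by
          rw [← Real.rpow_mul ht₀.le, neg_mul, inv_mul_eq_div]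
  have htail : ∫⁻ t in Ioi r, ENNReal.ofReal (t ^ (-(d / s))) =
      ENNReal.ofReal (s / (d - s) * r ^ (1 - d / s)) := by
    rw [lintegral_Ioi_ofReal_rpow_neg ((one_lt_div hs).2 hsd) hr, div_sub_one hs.ne', inv_div]
  have hmeas : Measurable fun y => dist x y ^ (-s) := by fun_prop
  refine (lintegral_ofReal_le_mul_add_lintegral_Ioi_meas_lt
    (ae_of_all _ fun y => Real.rpow_nonneg dist_nonneg _) hmeas.aemeasurable hr.le).trans ?_
  grw [setLIntegral_mono' measurableSet_Ioi hsuper, lintegral_mul_const _ (by fun_prop), htail]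

end LayerCake

theorem exists_nnreal_add_smul_mem_frontier {E : Type*} [NormedAddCommGroup E] [NormedSpace ℝ E]
    {K : Set E} (hK : IsBounded K) {y v : E} (hy : y ∈ K) (hv : v ≠ 0) :
    ∃ t : ℝ≥0, y + t • v ∈ frontier K := by
  let ray : ℝ≥0 → E := fun t => y + t • v
  have hray : Continuous ray := by fun_prop
  have hleaves : ray ⁻¹' K ≠ univ := by
    intro hstays
    obtain ⟨R, hR⟩ := hK.subset_closedBall y
    obtain ⟨m, hm⟩ := exists_lt_nsmul (norm_pos_iff.2 hv) R
    have hmem : ray m ∈ closedBall y R := hR (eq_univ_iff_forall.1 hstays m)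
    simp only [ray, NNReal.smul_def, NNReal.coe_natCast, mem_closedBall, dist_self_add_left,
      norm_smul, RCLike.norm_natCast, nsmul_eq_mul] at hmem hm
    linarith
  obtain ⟨t, ht⟩ := nonempty_frontier_iff.2 ⟨⟨0, by simpa [ray] using hy⟩, hleaves⟩
  exact ⟨t, hray.frontier_preimage_subset K ht⟩

section OuterNormalCone

variable {E : Type*} [NormedAddCommGroup E] [InnerProductSpace ℝ E]

/-- The cone of outer normals to the set `Ω` at the point `y`: the vectors making a non-acute angle
with `a - y` for every `a ∈ Ω`. The point `y` is not required to lie in `Ω`. -/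
def outerNormalCone (Ω : Set E) (y : E) : Set E :=
  {v | ∀ a ∈ Ω, ⟪v, a - y⟫_ℝ ≤ 0}

variable {Ω : Set E} {y y' v v' : E}

theorem smul_mem_outerNormalCone (hv : v ∈ outerNormalCone Ω y) (t : ℝ≥0) :
    t • v ∈ outerNormalCone Ω y := fun a ha => by
  rw [NNReal.smul_def, real_inner_smul_left]
  exact mul_nonpos_of_nonneg_of_nonpos t.2 (hv a ha)

theorem inner_sub_nonpos_of_mem_closure (hv : v ∈ outerNormalCone Ω y) {a : E}
    (ha : a ∈ closure Ω) : ⟪v, a - y⟫_ℝ ≤ 0 :=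
  closure_minimal (t := {a | ⟪v, a - y⟫_ℝ ≤ 0}) hv (isClosed_le (by fun_prop) continuous_const) ha

theorem dist_le_dist_add_of_mem_outerNormalCone (hy : y ∈ closure Ω) (hy' : y' ∈ closure Ω)
    (hv : v ∈ outerNormalCone Ω y) (hv' : v' ∈ outerNormalCone Ω y') :
    dist y y' ≤ dist (y + v) (y' + v') := by
  have hcross : 0 ≤ ⟪v - v', y - y'⟫_ℝ := by
    have h := inner_sub_nonpos_of_mem_closure hv hy'
    have h' := inner_sub_nonpos_of_mem_closure hv' hy
    rw [← neg_sub, inner_neg_right] at h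
    rw [inner_sub_left]
    linarith
  have hsq : ‖y - y'‖ ^ 2 ≤ ‖(y + v) - (y' + v')‖ ^ 2 := by
    rw [add_sub_add_comm, norm_add_sq_real, real_inner_comm]
    nlinarith [sq_nonneg ‖v - v'‖]
  rw [dist_eq_norm, dist_eq_norm]
  exact le_of_sq_le_sq hsq (norm_nonneg _)

theorem exists_ne_zero_mem_outerNormalCone_of_interior_nonempty [CompleteSpace E]
    (hΩ : Convex ℝ Ω) (hint : (interior Ω).Nonempty) (hy : y ∉ interior Ω) :
    ∃ v ≠ 0, v ∈ outerNormalCone Ω y := by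
  obtain ⟨f, u, hf, hfΩ, hfy⟩ := geometric_hahn_banach_of_nonempty_interior hΩ
    (convex_singleton y) (disjoint_singleton_right.2 hy) hint (singleton_nonempty y)
  refine ⟨(toDual ℝ E).symm f, by simpa using hf, fun a ha => ?_⟩
  rw [toDual_symm_apply, map_sub, sub_nonpos]
  exact (hfΩ a ha).trans (hfy y rfl)

theorem exists_ne_zero_mem_outerNormalCone_of_interior_eq_empty [FiniteDimensional ℝ E]
    (hΩ : Convex ℝ Ω) (hint : interior Ω = ∅) (hy : y ∈ closure Ω) :
    ∃ v ≠ 0, v ∈ outerNormalCone Ω y := by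
  have hy' : y ∈ affineSpan ℝ Ω := closure_minimal (subset_affineSpan ℝ Ω)
    (affineSpan ℝ Ω).closed_of_finiteDimensional hy
  have hspan : (affineSpan ℝ Ω).direction ≠ ⊤ := by
    rw [Ne, AffineSubspace.direction_eq_top_iff_of_nonempty ⟨y, hy'⟩,
      ← hΩ.interior_nonempty_iff_affineSpan_eq_top, hint]
    exact not_nonempty_empty
  obtain ⟨v, hv, hv₀⟩ := Submodule.exists_mem_ne_zero_of_ne_bot
    (mt Submodule.orthogonal_eq_bot_iff.1 hspan)
  refine ⟨v, hv₀, fun a ha => le_of_eq ?_⟩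
  exact Submodule.inner_left_of_mem_orthogonal
    (AffineSubspace.vsub_mem_direction (subset_affineSpan ℝ Ω ha) hy') hv

theorem exists_ne_zero_mem_outerNormalCone [FiniteDimensional ℝ E] (hΩ : Convex ℝ Ω)
    (hy : y ∈ frontier Ω) : ∃ v ≠ 0, v ∈ outerNormalCone Ω y := by
  rcases (interior Ω).eq_empty_or_nonempty with hint | hint
  · exact exists_ne_zero_mem_outerNormalCone_of_interior_eq_empty hΩ hint hy.1
  · exact exists_ne_zero_mem_outerNormalCone_of_interior_nonempty hΩ hint hy.2

end OuterNormalCone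

theorem image_stereographic_symm_mem_nhdsWithin {E : Type*} [NormedAddCommGroup E]
    [InnerProductSpace ℝ E] (x : sphere (0 : E) 1)
    {U : Set (ℝ ∙ ((-x : sphere (0 : E) 1) : E))ᗮ} (hU : U ∈ 𝓝 0) :
    (fun w => ((stereographic (norm_eq_of_mem_sphere (-x))).symm w : E)) '' U
      ∈ 𝓝[sphere 0 1] (x : E) := by
  let chart := stereographic (norm_eq_of_mem_sphere (-x))
  have hsource : x ∈ chart.source := ne_neg_of_mem_unit_sphere ℝ x
  have hcenter : chart.symm 0 = x := by
    rw [← stereographic_neg_apply x, chart.left_inv hsource]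
  have himage : chart.symm '' U ∈ 𝓝 (chart.symm 0) :=
    (isOpenEmbedding_stereographic_symm _).isOpenMap.image_mem_nhds hU
  rw [hcenter] at himage
  rw [nhdsWithin_eq_map_subtype_coe x.2, ← image_image Subtype.val]
  exact image_mem_map himage

section HausdorffMeasure

variable {E : Type*} [NormedAddCommGroup E] [MeasurableSpace E] [BorelSpace E] {d : ℝ}

theorem hausdorffMeasure_sphere [NormedSpace ℝ E] (hd : 0 ≤ d) (x : E) {ρ : ℝ} (hρ : 0 < ρ) :
    μH[d] (sphere x ρ) = ENNReal.ofReal (ρ ^ d) * μH[d] (sphere (0 : E) 1) := by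
  have hsphere : sphere x ρ = x +ᵥ ρ • sphere (0 : E) 1 := by
    rw [smul_sphere' hρ.ne', vadd_sphere, smul_zero, vadd_eq_add, add_zero, mul_one,
      Real.norm_of_nonneg hρ.le]
  rw [hsphere, hausdorffMeasure_vadd x (Or.inl hd), Measure.hausdorffMeasure_smul₀ hd hρ.ne',
    ENNReal.smul_def, smul_eq_mul, ENNReal.coe_rpow_of_nonneg _ hd,
    ← ENNReal.ofReal_rpow_of_nonneg hρ.le hd, ENNReal.ofReal, Real.nnnorm_of_nonneg hρ.le,
    Real.toNNReal_of_nonneg hρ.le]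

theorem hausdorffMeasure_image_lt_top_of_contDiff {V : Type*} [NormedAddCommGroup V]
    [NormedSpace ℝ V] [FiniteDimensional ℝ V] [NormedSpace ℝ E] {f : V → E} (hf : ContDiff ℝ 1 f)
    {K : Set V} (hK : IsCompact K) (hconv : Convex ℝ K) :
    μH[finrank ℝ V] (f '' K) < ∞ := by
  borelize V
  obtain ⟨L, hL⟩ := hf.contDiffOn.exists_lipschitzOnWith one_ne_zero hconv hK
  refine (hL.hausdorffMeasure_image_le (Nat.cast_nonneg _)).trans_lt ?_
  exact ENNReal.mul_lt_top (ENNReal.rpow_lt_top_of_nonneg (Nat.cast_nonneg _) ENNReal.coe_ne_top)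
    hK.measure_lt_top

variable [InnerProductSpace ℝ E] [FiniteDimensional ℝ E]

theorem hausdorffMeasure_unit_sphere_lt_top :
    μH[(finrank ℝ E : ℝ) - 1] (sphere (0 : E) 1) < ∞ := by
  refine (isCompact_sphere 0 1).measure_lt_top_of_nhdsWithin fun x hx => ?_
  lift x to sphere (0 : E) 1 using hx
  let V : Submodule ℝ E := (ℝ ∙ ((-x : sphere (0 : E) 1) : E))ᗮ
  have hdim : (finrank ℝ V : ℝ) = finrank ℝ E - 1 := by
    have h := (ℝ ∙ ((-x : sphere (0 : E) 1) : E)).finrank_add_finrank_orthogonal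
    rw [finrank_span_singleton (ne_zero_of_mem_unit_sphere (-x))] at h
    rw [eq_sub_iff_add_eq', ← h]
    simp [V]
  let chart : V → E := fun w => (stereographic (norm_eq_of_mem_sphere (-x))).symm w
  have hchart : ContDiff ℝ 1 chart := contDiff_stereoInvFunAux.comp V.subtypeL.contDiff
  refine ⟨chart '' closedBall 0 1,
    image_stereographic_symm_mem_nhdsWithin x (closedBall_mem_nhds 0 one_pos), ?_⟩
  rw [← hdim]
  exact hausdorffMeasure_image_lt_top_of_contDiff hchart (isCompact_closedBall 0 1)
    (convex_closedBall 0 1)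

variable {Ω : Set E}

theorem hausdorffMeasure_frontier_inter_le (hΩ : Convex ℝ Ω) {K : Set E} (hK : IsBounded K)
    (hd : 0 ≤ d) : μH[d] (frontier Ω ∩ K) ≤ μH[d] (frontier K) := by
  have hlift : ∀ y : ↥(frontier Ω ∩ K), ∃ v ∈ outerNormalCone Ω y, (y : E) + v ∈ frontier K := by
    rintro ⟨y, hyΩ, hyK⟩
    obtain ⟨v, hv₀, hv⟩ := exists_ne_zero_mem_outerNormalCone hΩ hyΩ
    obtain ⟨t, ht⟩ := exists_nnreal_add_smul_mem_frontier hK hyK hv₀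
    exact ⟨t • v, smul_mem_outerNormalCone hv t, ht⟩
  choose ν hν hνK using hlift
  have hanti : AntilipschitzWith 1 fun y : ↥(frontier Ω ∩ K) => (y : E) + ν y :=
    AntilipschitzWith.of_le_mul_dist fun y y' => by
      simpa only [NNReal.coe_one, one_mul, Subtype.dist_eq] using
        dist_le_dist_add_of_mem_outerNormalCone y.2.1.1 y'.2.1.1 (hν y) (hν y')
  calc μH[d] (frontier Ω ∩ K)
      = μH[d] (univ : Set ↥(frontier Ω ∩ K)) := by
        rw [← (isometry_subtype_coe (s := frontier Ω ∩ K)).hausdorffMeasure_image (Or.inl hd),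
          image_univ, Subtype.range_coe]
    _ ≤ μH[d] ((fun y : ↥(frontier Ω ∩ K) => (y : E) + ν y) '' univ) := by
        simpa using hanti.le_hausdorffMeasure_image hd univ
    _ ≤ μH[d] (frontier K) := measure_mono (image_subset_iff.2 fun y _ => hνK y)

theorem hausdorffMeasure_frontier_inter_closedBall_le (hΩ : Convex ℝ Ω) (hd : 0 ≤ d) (x : E)
    {ρ : ℝ} (hρ : 0 < ρ) :
    μH[d] (frontier Ω ∩ closedBall x ρ) ≤ ENNReal.ofReal (ρ ^ d) * μH[d] (sphere (0 : E) 1) := by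
  rw [← hausdorffMeasure_sphere hd x hρ, ← frontier_closedBall x hρ.ne']
  exact hausdorffMeasure_frontier_inter_le hΩ isBounded_closedBall hd

theorem hausdorffMeasure_frontier_lt_top [Nontrivial E] (hΩ : Convex ℝ Ω) (hbdd : IsBounded Ω) :
    μH[(finrank ℝ E : ℝ) - 1] (frontier Ω) < ∞ := by
  have hd : (0 : ℝ) ≤ (finrank ℝ E : ℝ) - 1 :=
    sub_nonneg.2 (Nat.one_le_cast.2 finrank_pos)
  obtain ⟨R, hR₀, hR⟩ := hbdd.subset_closedBall_lt 0 0
  have hfrontier : frontier Ω ⊆ closedBall 0 R :=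
    frontier_subset_closure.trans (closure_minimal hR isClosed_closedBall)
  rw [← inter_eq_left.2 hfrontier]
  exact (hausdorffMeasure_frontier_inter_closedBall_le hΩ hd 0 hR₀).trans_lt
    (ENNReal.mul_lt_top ENNReal.ofReal_lt_top hausdorffMeasure_unit_sphere_lt_top)

theorem setLIntegral_frontier_rpow_dist_le (hΩ : Convex ℝ Ω) (x : E) {s : ℝ} (hs : 0 < s)
    (hsd : s < d) {r : ℝ} (hr : 0 < r) :
    ∫⁻ y in frontier Ω, ENNReal.ofReal (dist x y ^ (-s)) ∂μH[d] ≤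
      μH[d] (frontier Ω) * ENNReal.ofReal r +
        ENNReal.ofReal (s / (d - s) * r ^ (1 - d / s)) * μH[d] (sphere (0 : E) 1) := by
  rw [← Measure.restrict_apply_univ (frontier Ω)]
  refine lintegral_rpow_dist_le_of_measure_closedBall_le hs hsd (fun ρ hρ => ?_) hr
  rw [Measure.restrict_apply isClosed_closedBall.measurableSet, inter_comm]
  exact hausdorffMeasure_frontier_inter_closedBall_le hΩ (hs.trans hsd).le x hρ

theorem setIntegral_frontier_rpow_dist_le (hΩ : Convex ℝ Ω) (hbdd : IsBounded Ω) (x : E) {s : ℝ}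
    (hs : 0 < s) (hsd : s < (finrank ℝ E : ℝ) - 1) {r : ℝ} (hr : 0 < r) :
    ∫ y in frontier Ω, dist x y ^ (-s) ∂μH[(finrank ℝ E : ℝ) - 1] ≤
      μH[(finrank ℝ E : ℝ) - 1].real (frontier Ω) * r +
        s / ((finrank ℝ E : ℝ) - 1 - s) * r ^ (1 - ((finrank ℝ E : ℝ) - 1) / s) *
          μH[(finrank ℝ E : ℝ) - 1].real (sphere (0 : E) 1) := by
  have hdim : (0 : ℝ) < finrank ℝ E := by linarith
  have : Nontrivial E := nontrivial_of_finrank_pos (R := ℝ) (Nat.cast_pos.1 hdim)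
  have hfrontier := (hausdorffMeasure_frontier_lt_top hΩ hbdd).ne
  have hsphere := (hausdorffMeasure_unit_sphere_lt_top (E := E)).ne
  have hcoef : 0 ≤ s / ((finrank ℝ E : ℝ) - 1 - s) * r ^ (1 - ((finrank ℝ E : ℝ) - 1) / s) :=
    mul_nonneg (div_nonneg hs.le (sub_nonneg.2 hsd.le)) (Real.rpow_nonneg hr.le _)
  have hmeas : Measurable fun y => dist x y ^ (-s) := by fun_prop
  rw [integral_eq_lintegral_of_nonneg_ae (ae_of_all _ fun y => Real.rpow_nonneg dist_nonneg _)
    hmeas.aestronglyMeasurable]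
  refine (ENNReal.toReal_mono (by finiteness) (setLIntegral_frontier_rpow_dist_le hΩ x hs hsd hr)
    ).trans_eq ?_
  rw [ENNReal.toReal_add (by finiteness) (by finiteness), ENNReal.toReal_mul, ENNReal.toReal_mul,
    ENNReal.toReal_ofReal hr.le, ENNReal.toReal_ofReal hcoef, measureReal_def, measureReal_def]

end HausdorffMeasure

theorem boundary_potential_layer_cake_bound_general (n : ℕ) (hn : 3 ≤ n)
    (Ω : Set (EuclideanSpace ℝ (Fin n))) (hΩ : Convex ℝ Ω) (hbdd : IsBounded Ω)
    (x : EuclideanSpace ℝ (Fin n)) (r : ℝ) (hr : 0 < r) :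
    (∫ y in frontier Ω, ‖x - y‖ ^ ((2 : ℝ) - (n : ℝ))
        ∂(μH[(n : ℝ) - 1] : Measure (EuclideanSpace ℝ (Fin n))))
      ≤ area n (frontier Ω) * r + ((n : ℝ) - 2) * sphereArea n * r ^ ((1 : ℝ) / ((2 : ℝ) - n)) := by
  have hn' : (3 : ℝ) ≤ n := by exact_mod_cast hn
  have hcoef : ((n : ℝ) - 2) / (n - 1 - (n - 2)) = n - 2 := by ring
  have hexp : 1 - ((n : ℝ) - 1) / (n - 2) = 1 / (2 - n) := by
    grind
  have h := setIntegral_frontier_rpow_dist_le hΩ hbdd x (s := n - 2) (r := r) (by linarith)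
    (by rw [finrank_euclideanSpace_fin]; linarith) hr
  simp only [finrank_euclideanSpace_fin, neg_sub, dist_eq_norm, hcoef, hexp] at h
  rwa [mul_right_comm] at h

/-- Layer-cake estimate for the Newtonian potential of the boundary surface
measure of a smooth convex body (Remark 2.3 (i)). -/
theorem boundary_potential_layer_cake_bound
    (n : ℕ) (hn : 3 ≤ n)
    (Ω : Set (EuclideanSpace ℝ (Fin n))) (hconv : Convex ℝ Ω) (hcomp : IsCompact Ω)
    (hint : (interior Ω).Nonempty) (hsm : HasSmoothBoundary n Ω)
    (x : EuclideanSpace ℝ (Fin n)) (r : ℝ) (hr : 0 < r) :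
    (∫ y in frontier Ω, ‖x - y‖ ^ ((2 : ℝ) - (n : ℝ))
        ∂(μH[(n : ℝ) - 1] : Measure (EuclideanSpace ℝ (Fin n))))
      ≤ area n (frontier Ω) * r + ((n : ℝ) - 2) * sphereArea n * r ^ ((1 : ℝ) / ((2 : ℝ) - n)) := by
  exact boundary_potential_layer_cake_bound_general n hn Ω hconv hcomp.isBounded x r hr
end
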